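/- arXiv:1305.3514 — 10 statements merged into one kernel-verified Lean document; each statement's English description precedes it below -/
import Mathlib

section
/- The 16 vectors ½·∑_{p∈(𝔽₂)⁴} K_p, ½·∑_{p: p₁=0} K_p, ½·∑_{p: p₂=0} K_p, ½·∑_{p: p₃=0} K_p, ½·∑_{p: p₄=0} K_p, K_{(0,0,0,0)}, K_{(1,0,0,0)}, K_{(0,1,0,0)}, K_{(0,0,1,0)}, K_{(0,0,0,1)}, K_{(0,0,1,1)}, K_{(0,1,0,1)}, K_{(1,0,0,1)}, K_{(0,1,1,0)}, K_{(1,0,1,0)}, K_{(1,1,0,0)} form a ℤ-basis of the Kummer lattice K; moreover K is an even negative definite lattice of rank 16, i.e. B(x,y) ∈ ℤ and B(x,x) ∈ 2ℤ for all x,y ∈ K and B(x,x) < 0 for all nonzero x ∈ K, and the determinant of the Gram matrix (B(v_i,v_j)) of the above 16 vectors equals 2⁶. -/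
namespace Stmt0

/-- The 16 points of the affine space `(𝔽₂)⁴`. -/
abbrev P : Type := Fin 4 → ZMod 2

/-- The ambient `ℚ`-vector space `ℚ^{(𝔽₂)⁴}`. -/
abbrev V : Type := P → ℚ

/-- The standard basis vector `K_p`. -/
noncomputable def Kvec (p : P) : V := Pi.single p 1

/-- The bilinear form with `B (K_p) (K_q) = -2 δ_{pq}`. -/
noncomputable def B (x y : V) : ℚ := -2 * ∑ p : P, x p * y p

/-- Affine hyperplanes of `(𝔽₂)⁴`. -/
def IsHyperplane (W : Finset P) : Prop :=
  ∃ α : P, α ≠ 0 ∧ ∃ ε : ZMod 2,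
    W = Finset.univ.filter (fun a => ∑ i, α i * a i = ε)

/-- The vector `½ ∑_{p ∈ W} K_p`. -/
noncomputable def halfSum (W : Finset P) : V := (1/2 : ℚ) • ∑ p ∈ W, Kvec p

/-- The Kummer lattice `K`: the `ℤ`-submodule generated by the `K_p`, the classes
`½ ∑_{p ∈ W} K_p` for affine hyperplanes `W` and the class `½ ∑_{p} K_p`. -/
noncomputable def KummerLattice : Submodule ℤ V :=
  Submodule.span ℤ
    (Set.range Kvec ∪ {x | ∃ W : Finset P, IsHyperplane W ∧ x = halfSum W} ∪
      {halfSum Finset.univ})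

/-- The 16 vectors of the statement. -/
noncomputable def v : Fin 16 → V :=
  ![halfSum Finset.univ,
    halfSum (Finset.univ.filter (fun a => a 0 = 0)),
    halfSum (Finset.univ.filter (fun a => a 1 = 0)),
    halfSum (Finset.univ.filter (fun a => a 2 = 0)),
    halfSum (Finset.univ.filter (fun a => a 3 = 0)),
    Kvec ![0,0,0,0], Kvec ![1,0,0,0], Kvec ![0,1,0,0], Kvec ![0,0,1,0],
    Kvec ![0,0,0,1], Kvec ![0,0,1,1], Kvec ![0,1,0,1], Kvec ![1,0,0,1],
    Kvec ![0,1,1,0], Kvec ![1,0,1,0], Kvec ![1,1,0,0]]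

/-- Twice the coordinates of the vectors `v i`. -/
def vz : Fin 16 → P → ℤ :=
  ![fun _ => 1, fun p => if p 0 = 0 then 1 else 0, fun p => if p 1 = 0 then 1 else 0,
    fun p => if p 2 = 0 then 1 else 0, fun p => if p 3 = 0 then 1 else 0,
    fun p => if p = ![0,0,0,0] then 2 else 0, fun p => if p = ![1,0,0,0] then 2 else 0,
    fun p => if p = ![0,1,0,0] then 2 else 0, fun p => if p = ![0,0,1,0] then 2 else 0,
    fun p => if p = ![0,0,0,1] then 2 else 0, fun p => if p = ![0,0,1,1] then 2 else 0,
    fun p => if p = ![0,1,0,1] then 2 else 0, fun p => if p = ![1,0,0,1] then 2 else 0,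
    fun p => if p = ![0,1,1,0] then 2 else 0, fun p => if p = ![1,0,1,0] then 2 else 0,
    fun p => if p = ![1,1,0,0] then 2 else 0]

/-- An enumeration of the points making the coordinate matrix triangular. -/
def pt : Fin 16 → P :=
  ![![1,1,1,1], ![0,1,1,1], ![1,0,1,1], ![1,1,0,1], ![1,1,1,0],
    ![0,0,0,0], ![1,0,0,0], ![0,1,0,0], ![0,0,1,0],
    ![0,0,0,1], ![0,0,1,1], ![0,1,0,1], ![1,0,0,1],
    ![0,1,1,0], ![1,0,1,0], ![1,1,0,0]]

lemma halfSum_apply (W : Finset P) (p : P) : halfSum W p = if p ∈ W then 1/2 else 0 := by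
  simp [halfSum, Kvec, Finset.sum_apply, Pi.single_apply]

lemma Kvec_apply (q p : P) : Kvec q p = if p = q then 1 else 0 := by
  simp [Kvec, Pi.single_apply]

lemma v_apply (i : Fin 16) (p : P) : v i p = (vz i p : ℚ) / 2 := by
  have h1 : ∀ (Q : Prop) [Decidable Q], (if Q then (1/2 : ℚ) else 0)
      = (((if Q then 1 else 0 : ℤ)) : ℚ) / 2 := by
    intro Q _; split_ifs <;> simp
  have h2 : ∀ (Q : Prop) [Decidable Q], (if Q then (1 : ℚ) else 0)
      = (((if Q then 2 else 0 : ℤ)) : ℚ) / 2 := by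
    intro Q _; split_ifs <;> simp
  fin_cases i
  · exact (halfSum_apply _ _).trans (by simp [vz])
  iterate 4
    · refine (halfSum_apply _ _).trans ?_
      simp only [Finset.mem_filter, Finset.mem_univ, true_and]
      exact h1 _
  all_goals exact (Kvec_apply _ _).trans (h2 _)

lemma pt_bij : Function.Bijective pt := by
  constructor
  · have : ∀ i j, pt i = pt j → i = j := by decide +kernel
    exact this
  · have : ∀ p, ∃ i, pt i = p := by decide +kernel
    exact this

/-- The coordinate matrix. -/
noncomputable def M : Matrix (Fin 16) (Fin 16) ℚ := Matrix.of fun i j => v i (pt j)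

lemma M_det : M.det = 1 / 32 := by
  have ht : M.BlockTriangular id := by
    intro i j hij
    have : ∀ i j : Fin 16, j < i → vz i (pt j) = 0 := by decide +kernel
    simp [M, v_apply, this i j hij]
  rw [Matrix.det_of_isUpperTriangular ht]
  have : ∀ i : Fin 16, vz i (pt i) = if i < 5 then 1 else 2 := by decide +kernel
  have h : ∏ i : Fin 16, ((if i < 5 then 1 else 2 : ℤ) : ℤ) = 2 ^ 11 := by decide +kernel
  simp only [M, Matrix.of_apply, v_apply, this, Finset.prod_div_distrib]
  rw [← Int.cast_prod, h]
  norm_num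

lemma gram_eq : (Matrix.of fun i j => B (v i) (v j)) = (-2 : ℚ) • (M * M.transpose) := by
  ext i j
  simp only [Matrix.of_apply, B, Matrix.smul_apply, Matrix.mul_apply, Matrix.transpose_apply,
    M, smul_eq_mul]
  congr 1
  exact ((Equiv.ofBijective pt pt_bij).sum_comp (fun p => v i p * v j p)).symm

lemma gram_det : (Matrix.of fun i j => B (v i) (v j)).det = 2 ^ 6 := by
  rw [gram_eq, Matrix.det_smul, Matrix.det_mul, Matrix.det_transpose, M_det]
  norm_num

lemma v_indep : LinearIndependent ℤ v := by
  have h : LinearIndependent ℚ M.row :=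
    Matrix.linearIndependent_rows_of_det_ne_zero (A := M) (by rw [M_det]; norm_num)
  have h2 : LinearIndependent ℚ v :=
    LinearIndependent.of_comp (LinearMap.funLeft ℚ ℚ pt) h
  exact h2.restrict_scalars' ℤ

/-- The span of the 16 vectors. -/
noncomputable def S : Submodule ℤ V := Submodule.span ℤ (Set.range v)

lemma v_mem (i : Fin 16) : v i ∈ S := Submodule.subset_span ⟨i, rfl⟩

lemma Kvec_aux (W : Finset P) (p : P) (hp : p ∈ W) (hW : halfSum W ∈ S)
    (h : ∀ q ∈ W, q ≠ p → Kvec q ∈ S) : Kvec p ∈ S := by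
  have h1 : Kvec p = (2 : ℤ) • halfSum W - ∑ q ∈ W.erase p, Kvec q := by
    rw [← Finset.add_sum_erase W Kvec hp |> eq_sub_of_add_eq |> Eq.symm |> fun h => h]
    congr 1
    ext x
    simp [halfSum]
  rw [h1]
  refine S.sub_mem (S.smul_mem _ hW) (S.sum_mem fun q hq => ?_)
  exact h q (Finset.mem_of_mem_erase hq) (Finset.ne_of_mem_erase hq)

lemma Kvec_high (j : Fin 16) (hj : 5 ≤ j) : Kvec (pt j) ∈ S := by
  have : Kvec (pt j) = v j := by
    fin_cases j
    iterate 5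
      · exact absurd hj (by decide)
    all_goals rfl
  rw [this]
  exact v_mem j

lemma Kvec_mid (j : Fin 16) (hj : 1 ≤ j) : Kvec (pt j) ∈ S := by
  by_cases h5 : 5 ≤ j
  · exact Kvec_high j h5
  have key : ∀ i : Fin 4, ∀ q : P, q i = 0 → q ≠ pt (i.castLE (by norm_num) + 1) →
      ∃ k, 5 ≤ k ∧ pt k = q := by decide +kernel
  have key2 : ∀ i : Fin 4, pt (i.castLE (by norm_num) + 1) i = 0 := by decide +kernel
  have main : ∀ i : Fin 4, halfSum (Finset.univ.filter (fun a => a i = 0)) ∈ S →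
      Kvec (pt (i.castLE (by norm_num) + 1)) ∈ S := by
    intro i hi
    refine Kvec_aux _ _ ?_ hi ?_
    · simpa using key2 i
    · intro q hq hne
      obtain ⟨k, hk, rfl⟩ := key i q (by simpa using hq) hne
      exact Kvec_high k hk
  have hc : j = 1 ∨ j = 2 ∨ j = 3 ∨ j = 4 := by
    revert j; decide
  rcases hc with rfl | rfl | rfl | rfl
  · exact main 0 (v_mem 1)
  · exact main 1 (v_mem 2)
  · exact main 2 (v_mem 3)
  · exact main 3 (v_mem 4)

lemma Kvec_mem (p : P) : Kvec p ∈ S := by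
  obtain ⟨j, rfl⟩ := pt_bij.2 p
  by_cases hj : 1 ≤ j
  · exact Kvec_mid j hj
  have h0 : j = 0 := by revert j; decide
  subst h0
  refine Kvec_aux Finset.univ _ (Finset.mem_univ _) (v_mem 0) ?_
  intro q _ hq
  obtain ⟨k, rfl⟩ := pt_bij.2 q
  refine Kvec_mid k ?_
  have : k ≠ 0 := by rintro rfl; exact hq rfl
  revert this; revert k; decide

/-- A vector with integral coordinates lies in the span. -/
lemma int_mem (x : V) (n : P → ℤ) (h : ∀ p, x p = n p) : x ∈ S := by
  have : x = ∑ p, n p • Kvec p := by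
    ext q
    simp [Finset.sum_apply, Kvec_apply, h]
  rw [this]
  exact S.sum_mem fun p _ => S.smul_mem _ (Kvec_mem p)

/-- Lift of `ZMod 2` to the integers `0, 1`. -/
def lft (a : ZMod 2) : ℤ := if a = 0 then 0 else 1

lemma hyper_aux : ∀ a0 a1 a2 a3 e p0 p1 p2 p3 : ZMod 2,
    (2 : ℤ) ∣ (if a0 * p0 + a1 * p1 + a2 * p2 + a3 * p3 = e then 1 else 0)
      - (lft (1 + e + a0 + a1 + a2 + a3) + lft a0 * (if p0 = 0 then 1 else 0)
        + lft a1 * (if p1 = 0 then 1 else 0) + lft a2 * (if p2 = 0 then 1 else 0)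
        + lft a3 * (if p3 = 0 then 1 else 0)) := by decide +kernel

lemma hyper_mem (W : Finset P) (hW : IsHyperplane W) : halfSum W ∈ S := by
  obtain ⟨α, -, e, rfl⟩ := hW
  choose n hn using fun p : P => hyper_aux (α 0) (α 1) (α 2) (α 3) e (p 0) (p 1) (p 2) (p 3)
  set y : V := lft (1 + e + α 0 + α 1 + α 2 + α 3) • v 0 + lft (α 0) • v 1 + lft (α 1) • v 2
    + lft (α 2) • v 3 + lft (α 3) • v 4 with hy
  have hyS : y ∈ S := by
    refine S.add_mem (S.add_mem (S.add_mem (S.add_mem ?_ ?_) ?_) ?_) ?_ <;>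
      exact S.smul_mem _ (v_mem _)
  rw [← S.sub_mem_iff_left hyS]
  refine int_mem _ n fun p => ?_
  have h := congrArg (fun z : ℤ => (z : ℚ) / 2) (hn p)
  beta_reduce at h
  have e0 : vz 0 p = 1 := rfl
  have e1 : vz 1 p = if p 0 = 0 then 1 else 0 := rfl
  have e2 : vz 2 p = if p 1 = 0 then 1 else 0 := rfl
  have e3 : vz 3 p = if p 2 = 0 then 1 else 0 := rfl
  have e4 : vz 4 p = if p 3 = 0 then 1 else 0 := rfl
  rw [← e1, ← e2, ← e3, ← e4] at h
  push_cast at h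
  simp only [hy, Pi.sub_apply, Pi.add_apply, Pi.smul_apply, halfSum_apply, v_apply, e0,
    Finset.mem_filter, Finset.mem_univ, true_and, Fin.sum_univ_four]
  simp only [zsmul_eq_mul]
  have h3 : (if α 0 * p 0 + α 1 * p 1 + α 2 * p 2 + α 3 * p 3 = e then (1/2 : ℚ) else 0)
      = (if α 0 * p 0 + α 1 * p 1 + α 2 * p 2 + α 3 * p 3 = e then (1 : ℚ) else 0) / 2 := by
    split_ifs <;> simp
  rw [h3]
  push_cast
  linarith

lemma span_eq : S = KummerLattice := by
  apply le_antisymm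
  · refine Submodule.span_le.2 ?_
    have hh : ∀ (i : Fin 4), halfSum (Finset.univ.filter (fun a => a i = 0)) ∈ KummerLattice := by
      intro i
      refine Submodule.subset_span (Or.inl (Or.inr ⟨_, ⟨Pi.single i 1, ?_, 0, ?_⟩, rfl⟩))
      · intro h
        have := congrFun h i
        simp at this
      · ext a
        simp [Pi.single_apply]
    have hk : ∀ p, Kvec p ∈ KummerLattice := fun p =>
      Submodule.subset_span (Or.inl (Or.inl ⟨p, rfl⟩))
    rintro _ ⟨i, rfl⟩
    fin_cases i
    · exact Submodule.subset_span (Or.inr rfl)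
    · exact hh 0
    · exact hh 1
    · exact hh 2
    · exact hh 3
    all_goals exact hk _
  · refine Submodule.span_le.2 ?_
    rintro x ((⟨p, rfl⟩ | ⟨W, hW, rfl⟩) | hx)
    · exact Kvec_mem p
    · exact hyper_mem W hW
    · rw [Set.mem_singleton_iff] at hx
      subst hx
      exact v_mem 0

lemma B_add_left (x y z : V) : B (x + y) z = B x z + B y z := by
  simp [B, add_mul, Finset.sum_add_distrib, mul_add]

lemma B_comm (x y : V) : B x y = B y x := by
  simp [B, mul_comm]

lemma B_smul_left (n : ℤ) (x z : V) : B (n • x) z = n * B x z := by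
  simp only [B, Pi.smul_apply, zsmul_eq_mul, mul_assoc, ← Finset.mul_sum]
  ring

lemma B_zero_left (z : V) : B 0 z = 0 := by simp [B]

lemma B_v (i j : Fin 16) : B (v i) (v j) = -((∑ p, vz i p * vz j p : ℤ) : ℚ) / 2 := by
  simp only [B, v_apply]
  push_cast
  rw [Finset.mul_sum, neg_div, Finset.sum_div, ← Finset.sum_neg_distrib]
  exact Finset.sum_congr rfl fun p _ => by ring

lemma B_int_v (i j : Fin 16) : ∃ n : ℤ, B (v i) (v j) = n := by
  have : ∀ i j : Fin 16, (2 : ℤ) ∣ ∑ p, vz i p * vz j p := by decide +kernel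
  obtain ⟨n, hn⟩ := this i j
  refine ⟨-n, ?_⟩
  rw [B_v, hn]; push_cast; ring

lemma B_even_v (i : Fin 16) : ∃ n : ℤ, B (v i) (v i) = 2 * n := by
  have : ∀ i : Fin 16, (4 : ℤ) ∣ ∑ p, vz i p * vz i p := by decide +kernel
  obtain ⟨n, hn⟩ := this i
  refine ⟨-n, ?_⟩
  rw [B_v, hn]; push_cast; ring

lemma B_int_aux (z : V) (hz : ∀ i, ∃ n : ℤ, B (v i) z = n) (x : V) (hx : x ∈ S) :
    ∃ n : ℤ, B x z = n := by
  induction hx using Submodule.span_induction with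
  | mem x h => obtain ⟨i, rfl⟩ := h; exact hz i
  | zero => exact ⟨0, by simp [B_zero_left]⟩
  | add x y _ _ h1 h2 =>
    obtain ⟨a, ha⟩ := h1
    obtain ⟨b, hb⟩ := h2
    exact ⟨a + b, by rw [B_add_left, ha, hb]; push_cast; rfl⟩
  | smul n x _ h =>
    obtain ⟨a, ha⟩ := h
    exact ⟨n * a, by rw [B_smul_left, ha]; push_cast; rfl⟩

lemma B_int (x : V) (hx : x ∈ S) (y : V) (hy : y ∈ S) : ∃ n : ℤ, B x y = n := by
  refine B_int_aux y (fun i => ?_) x hx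
  rw [B_comm]
  exact B_int_aux (v i) (fun j => B_int_v j i) y hy

lemma B_even (x : V) (hx : x ∈ S) : ∃ n : ℤ, B x x = 2 * n := by
  induction hx using Submodule.span_induction with
  | mem x h => obtain ⟨i, rfl⟩ := h; exact B_even_v i
  | zero => exact ⟨0, by simp [B_zero_left]⟩
  | add x y hx hy h1 h2 =>
    obtain ⟨a, ha⟩ := h1
    obtain ⟨b, hb⟩ := h2
    obtain ⟨c, hc⟩ := B_int x hx y hy
    refine ⟨a + b + c, ?_⟩
    rw [B_add_left, B_comm x, B_comm y, B_add_left, B_add_left, ha, hb, B_comm y x, hc]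
    push_cast; ring
  | smul n x _ h =>
    obtain ⟨a, ha⟩ := h
    refine ⟨n * n * a, ?_⟩
    rw [B_smul_left, B_comm, B_smul_left, ha]
    push_cast; ring

lemma B_neg (x : V) (hx : x ≠ 0) : B x x < 0 := by
  obtain ⟨p, hp⟩ := Function.ne_iff.1 hx
  have : 0 < ∑ p : P, x p * x p :=
    Finset.sum_pos' (fun q _ => mul_self_nonneg _) ⟨p, Finset.mem_univ _, mul_self_pos.2 hp⟩
  unfold B
  linarith

/-- The 16 listed vectors form a `ℤ`-basis of the Kummer lattice `K` (hence `K` has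
rank 16); `K` is an even lattice, it is negative definite, and the determinant of the
Gram matrix of the 16 listed vectors equals `2⁶`. -/
theorem stmt_0 :
    LinearIndependent ℤ v ∧
    Submodule.span ℤ (Set.range v) = KummerLattice ∧
    (∀ x ∈ KummerLattice, ∀ y ∈ KummerLattice, ∃ n : ℤ, B x y = n) ∧
    (∀ x ∈ KummerLattice, ∃ n : ℤ, B x x = 2 * n) ∧
    (∀ x ∈ KummerLattice, x ≠ 0 → B x x < 0) ∧
    (Matrix.of fun i j => B (v i) (v j)).det = 2 ^ 6 := by
  rw [← span_eq]
  exact ⟨v_indep, rfl, B_int, B_even, fun x _ => B_neg x, gram_det⟩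

end Stmt0
end

section
/- For every vector v = (a₁,a₂,a₃,a₄) ∈ ℤ⁴ there exist integers d and e and an isometry f of U ⊕ U such that f(v) = (d, d·e, 0, 0). -/
namespace Stmt1

/-- The bilinear form of `U ⊕ U` on `ℤ⁴`: the orthogonal sum of two hyperbolic planes. -/
def B (x y : Fin 4 → ℤ) : ℤ := x 0 * y 1 + x 1 * y 0 + x 2 * y 3 + x 3 * y 2

def Good (v : Fin 4 → ℤ) : Prop :=
    ∃ (d e : ℤ) (f : (Fin 4 → ℤ) ≃ₗ[ℤ] (Fin 4 → ℤ)),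
      (∀ x y, B (f x) (f y) = B x y) ∧ f v = ![d, d * e, 0, 0]

theorem Good.of_isom {v : Fin 4 → ℤ} (g : (Fin 4 → ℤ) ≃ₗ[ℤ] (Fin 4 → ℤ))
    (hg : ∀ x y, B (g x) (g y) = B x y) (h : Good (g v)) : Good v := by
  obtain ⟨d, e, f, hf, hv⟩ := h
  exact ⟨d, e, g.trans f, fun x y => by simp [hf, hg], by simpa using hv⟩

def S1 : (Fin 4 → ℤ) ≃ₗ[ℤ] (Fin 4 → ℤ) where
  toFun x := ![x 1, x 0, x 2, x 3]
  invFun x := ![x 1, x 0, x 2, x 3]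
  map_add' x y := by ext i; fin_cases i <;> simp
  map_smul' x y := by ext i; fin_cases i <;> simp
  left_inv x := by ext i; fin_cases i <;> simp
  right_inv x := by ext i; fin_cases i <;> simp

def S2 : (Fin 4 → ℤ) ≃ₗ[ℤ] (Fin 4 → ℤ) where
  toFun x := ![x 0, x 1, x 3, x 2]
  invFun x := ![x 0, x 1, x 3, x 2]
  map_add' x y := by ext i; fin_cases i <;> simp
  map_smul' x y := by ext i; fin_cases i <;> simp
  left_inv x := by ext i; fin_cases i <;> simp
  right_inv x := by ext i; fin_cases i <;> simp

def S3 : (Fin 4 → ℤ) ≃ₗ[ℤ] (Fin 4 → ℤ) where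
  toFun x := ![x 2, x 3, x 0, x 1]
  invFun x := ![x 2, x 3, x 0, x 1]
  map_add' x y := by ext i; fin_cases i <;> simp
  map_smul' x y := by ext i; fin_cases i <;> simp
  left_inv x := by ext i; fin_cases i <;> simp
  right_inv x := by ext i; fin_cases i <;> simp

def T (k : ℤ) : (Fin 4 → ℤ) ≃ₗ[ℤ] (Fin 4 → ℤ) where
  toFun x := ![x 0, x 1 - k * x 2, x 2, x 3 + k * x 0]
  invFun x := ![x 0, x 1 + k * x 2, x 2, x 3 - k * x 0]
  map_add' x y := by ext i; fin_cases i <;> simp <;> ring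
  map_smul' x y := by ext i; fin_cases i <;> simp <;> ring
  left_inv x := by ext i; fin_cases i <;> simp
  right_inv x := by ext i; fin_cases i <;> simp

theorem good1 {a b c d : ℤ} (h : Good ![b, a, c, d]) : Good ![a, b, c, d] :=
  Good.of_isom S1 (fun x y => by simp [S1, B]; ring) (by simpa [S1] using h)

theorem good2 {a b c d : ℤ} (h : Good ![a, b, d, c]) : Good ![a, b, c, d] :=
  Good.of_isom S2 (fun x y => by simp [S2, B]; ring) (by simpa [S2] using h)

theorem good3 {a b c d : ℤ} (h : Good ![c, d, a, b]) : Good ![a, b, c, d] :=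
  Good.of_isom S3 (fun x y => by simp [S3, B]; ring) (by simpa [S3] using h)

theorem goodT (k : ℤ) {a b c d : ℤ} (h : Good ![a, b - k * c, c, d + k * a]) :
    Good ![a, b, c, d] :=
  Good.of_isom (T k) (fun x y => by simp [T, B]; ring) (by simpa [T] using h)

theorem good_ne (n : ℕ) : ∀ a b c d : ℤ, a ≠ 0 → a.natAbs ≤ n → Good ![a, b, c, d] := by
  induction n with
  | zero => intro a b c d ha h; omega
  | succ n ih =>
    -- the case where `a` does not divide the last coordinate
    have key : ∀ a b c d : ℤ, a ≠ 0 → a.natAbs ≤ n + 1 → ¬ a ∣ d → Good ![a, b, c, d] := by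
      intro a b c d ha h hd
      apply goodT (-(d / a))
      have e : d + -(d / a) * a = d % a := by
        have := Int.emod_add_mul_ediv d a
        linarith
      rw [e]
      apply good2
      apply good3
      have h1 := Int.emod_nonneg d ha
      have h2 := Int.emod_lt_abs d ha
      rw [Int.abs_eq_natAbs] at h2
      have h3 : d % a ≠ 0 := fun h0 => hd (Int.dvd_of_emod_eq_zero h0)
      exact ih _ _ _ _ h3 (by omega)
    intro a b c d ha h
    by_cases hd : a ∣ d
    swap
    · exact key _ _ _ _ ha h hd
    by_cases hc : a ∣ c
    swap
    · exact good2 (key _ _ _ _ ha h hc)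
    obtain ⟨k, rfl⟩ := hd
    obtain ⟨l, rfl⟩ := hc
    apply goodT (-k)
    apply good2
    apply goodT (-l)
    have e1 : a * k + -k * a = 0 := by ring
    have e2 : a * l + -l * a = 0 := by ring
    rw [e1, e2]
    generalize b - -k * (a * l) - -l * 0 = b'
    by_cases hb : a ∣ b'
    · obtain ⟨e, rfl⟩ := hb
      exact ⟨a, e, LinearEquiv.refl ℤ _, fun _ _ => rfl, rfl⟩
    · apply good1
      apply goodT 1
      apply good1
      have e3 : a - 1 * 0 = a := by ring
      have e4 : 0 + 1 * b' = b' := by ring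
      rw [e3, e4]
      exact key _ _ _ _ ha h hb

/-- For every vector `v = (a₁,a₂,a₃,a₄) ∈ U ⊕ U` there exist integers `d`, `e` and an
isometry `f` of `U ⊕ U` with `f v = (d, d·e, 0, 0)`. -/
theorem stmt_1 (v : Fin 4 → ℤ) :
    ∃ (d e : ℤ) (f : (Fin 4 → ℤ) ≃ₗ[ℤ] (Fin 4 → ℤ)),
      (∀ x y, B (f x) (f y) = B x y) ∧ f v = ![d, d * e, 0, 0] := by
  have hv : v = ![v 0, v 1, v 2, v 3] := by ext i; fin_cases i <;> rfl
  rw [hv]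
  generalize v 0 = a, v 1 = b, v 2 = c, v 3 = d
  change Good _
  by_cases ha : a = 0
  swap
  · exact good_ne _ _ _ _ _ ha le_rfl
  by_cases hb : b = 0
  swap
  · exact good1 (good_ne _ _ _ _ _ hb le_rfl)
  by_cases hc : c = 0
  swap
  · exact good3 (good_ne _ _ _ _ _ hc le_rfl)
  by_cases hd : d = 0
  swap
  · exact good2 (good3 (good_ne _ _ _ _ _ hd le_rfl))
  subst ha hb hc hd
  exact ⟨0, 0, LinearEquiv.refl ℤ _, fun _ _ => rfl, rfl⟩

end Stmt1
end

section
/- For all integers a₁, a₂, with d := gcd(a₁,a₂), there exist an integer e with d²·e = a₁·a₂ and an isometry f of U ⊕ U such that f(a₁,a₂,0,0) = (d, d·e, 0, 0). -/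
namespace Stmt2

/-- The bilinear form of `U ⊕ U` on `ℤ⁴`: the orthogonal sum of two hyperbolic planes. -/
def B (x y : Fin 4 → ℤ) : ℤ := x 0 * y 1 + x 1 * y 0 + x 2 * y 3 + x 3 * y 2

/-- The map `X ↦ P X Q` where `x` is viewed as the matrix `X = [[x 0, -x 2], [x 3, x 1]]`. -/
def act (a b c d k l m n : ℤ) (x : Fin 4 → ℤ) : Fin 4 → ℤ :=
  ![(a * x 0 + b * x 3) * k + (-a * x 2 + b * x 1) * m,
    (c * x 0 + d * x 3) * l + (-c * x 2 + d * x 1) * n,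
    -((a * x 0 + b * x 3) * l + (-a * x 2 + b * x 1) * n),
    (c * x 0 + d * x 3) * k + (-c * x 2 + d * x 1) * m]

theorem act_act (a b c d k l m n : ℤ) (x : Fin 4 → ℤ) (h : a * d - b * c = 1)
    (h' : k * n - l * m = 1) :
    act d (-b) (-c) a n (-l) (-m) k (act a b c d k l m n x) = x := by
  have key : ∀ z : ℤ, (a * d - b * c) * (k * n - l * m) * z = z := by
    intro z; rw [h, h']; ring
  funext i
  rw [← key (x i)]
  fin_cases i <;> simp [act] <;> ring

/-- `act` as a linear equivalence. -/
def actEquiv (a b c d k l m n : ℤ) (h : a * d - b * c = 1) (h' : k * n - l * m = 1) :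
    (Fin 4 → ℤ) ≃ₗ[ℤ] (Fin 4 → ℤ) where
  toFun := act a b c d k l m n
  invFun := act d (-b) (-c) a n (-l) (-m) k
  map_add' x y := by
    funext i
    fin_cases i <;> simp [act] <;> ring
  map_smul' r x := by
    funext i
    fin_cases i <;> simp [act] <;> ring
  left_inv x := act_act a b c d k l m n x h h'
  right_inv x := by
    have := act_act d (-b) (-c) a n (-l) (-m) k x (by linarith) (by linarith)
    simpa using this

theorem B_act (a b c d k l m n : ℤ) (h : a * d - b * c = 1) (h' : k * n - l * m = 1)
    (x y : Fin 4 → ℤ) : B (act a b c d k l m n x) (act a b c d k l m n y) = B x y := by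
  have key : ∀ z : ℤ, (a * d - b * c) * (k * n - l * m) * z = z := by
    intro z; rw [h, h']; ring
  rw [← key (B x y)]
  simp [act, B]
  ring

/-- For all integers `a₁`, `a₂` with `d = gcd(a₁,a₂)`, there exist an integer `e` with
`d²e = a₁a₂` and an isometry of `U ⊕ U` sending `(a₁,a₂,0,0)` to `(d, d·e, 0, 0)`. -/
theorem stmt_2 (a₁ a₂ : ℤ) :
    ∃ e : ℤ, (Int.gcd a₁ a₂ : ℤ) ^ 2 * e = a₁ * a₂ ∧
      ∃ f : (Fin 4 → ℤ) ≃ₗ[ℤ] (Fin 4 → ℤ),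
        (∀ x y, B (f x) (f y) = B x y) ∧
        f ![a₁, a₂, 0, 0] = ![(Int.gcd a₁ a₂ : ℤ), (Int.gcd a₁ a₂ : ℤ) * e, 0, 0] := by
  by_cases h0 : Int.gcd a₁ a₂ = 0
  · obtain ⟨rfl, rfl⟩ := Int.gcd_eq_zero_iff.mp h0
    exact ⟨0, by simp, LinearEquiv.refl ℤ _, fun _ _ => rfl, by simp⟩
  have hd : (Int.gcd a₁ a₂ : ℤ) ≠ 0 := by exact_mod_cast h0
  obtain ⟨p, hp⟩ := Int.gcd_dvd_left a₁ a₂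
  obtain ⟨q, hq⟩ := Int.gcd_dvd_right a₁ a₂
  have hb := Int.gcd_eq_gcd_ab a₁ a₂
  generalize Int.gcdA a₁ a₂ = s at hb
  generalize Int.gcdB a₁ a₂ = t at hb
  generalize (Int.gcd a₁ a₂ : ℤ) = g at *
  subst hp hq
  have h1 : p * s + q * t = 1 := by
    apply mul_left_cancel₀ hd
    linear_combination -hb
  refine ⟨p * q, by ring, actEquiv 1 1 (-q * t) (p * s) s (-q) t p (by linarith) (by linarith),
    fun x y => B_act _ _ _ _ _ _ _ _ (by linarith) (by linarith) x y, ?_⟩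
  change act _ _ _ _ _ _ _ _ _ = _
  funext i
  fin_cases i <;> simp [act]
  · linear_combination g * h1
  · linear_combination g * p * q * h1
  · ring
  · ring

end Stmt2
end

section
/- Let m be an integer. For every primitive vector v = (a₀,a₁,a₂,a₃,a₄) ∈ ℤ⁵ there exist integers a, b, e and an isometry f of T_{2m} such that f(v) = (a, b, b·e, 0, 0), and this image vector is again primitive. -/
namespace Stmt3

/-- The bilinear form of `T_{2m} = ⟨-2m⟩ ⊕ U ⊕ U` on `ℤ⁵`. -/
def B (m : ℤ) (x y : Fin 5 → ℤ) : ℤ :=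
  -2 * m * (x 0 * y 0) + x 1 * y 2 + x 2 * y 1 + x 3 * y 4 + x 4 * y 3

/-- A vector of `ℤⁿ` is primitive if the gcd of its coordinates is `1`. -/
def IsPrimitive {n : ℕ} (v : Fin n → ℤ) : Prop := Finset.univ.gcd v = 1

/-- `w` is the image of `v` under an isometry. -/
def Reach (m : ℤ) (v w : Fin 5 → ℤ) : Prop :=
  ∃ f : (Fin 5 → ℤ) ≃ₗ[ℤ] (Fin 5 → ℤ), (∀ x y, B m (f x) (f y) = B m x y) ∧ f v = w

/-- Exchange of the two hyperbolic planes. -/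
def swapU : (Fin 5 → ℤ) ≃ₗ[ℤ] (Fin 5 → ℤ) where
  toFun x := ![x 0, x 3, x 4, x 1, x 2]
  invFun x := ![x 0, x 3, x 4, x 1, x 2]
  map_add' x y := by ext i; fin_cases i <;> simp
  map_smul' c x := by ext i; fin_cases i <;> simp
  left_inv x := by ext i; fin_cases i <;> simp
  right_inv x := by ext i; fin_cases i <;> simp

/-- Exchange of the last two coordinates. -/
def swapE : (Fin 5 → ℤ) ≃ₗ[ℤ] (Fin 5 → ℤ) where
  toFun x := ![x 0, x 1, x 2, x 4, x 3]
  invFun x := ![x 0, x 1, x 2, x 4, x 3]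
  map_add' x y := by ext i; fin_cases i <;> simp
  map_smul' c x := by ext i; fin_cases i <;> simp
  left_inv x := by ext i; fin_cases i <;> simp
  right_inv x := by ext i; fin_cases i <;> simp

/-- An Eichler transvection. -/
def eich (t : ℤ) : (Fin 5 → ℤ) ≃ₗ[ℤ] (Fin 5 → ℤ) where
  toFun x := ![x 0, x 1, x 2 - t * x 4, x 3 + t * x 1, x 4]
  invFun x := ![x 0, x 1, x 2 + t * x 4, x 3 - t * x 1, x 4]
  map_add' x y := by ext i; fin_cases i <;> simp <;> ring
  map_smul' c x := by ext i; fin_cases i <;> simp <;> ring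
  left_inv x := by ext i; fin_cases i <;> simp
  right_inv x := by ext i; fin_cases i <;> simp

theorem Reach.step {m : ℤ} {v w : Fin 5 → ℤ} (h : Reach m v w)
    (g : (Fin 5 → ℤ) ≃ₗ[ℤ] (Fin 5 → ℤ)) (hg : ∀ x y, B m (g x) (g y) = B m x y) :
    Reach m v (g w) := by
  obtain ⟨f, hf, rfl⟩ := h
  exact ⟨f.trans g, fun x y => by simp [hg, hf], rfl⟩

theorem Reach.u {m : ℤ} {v : Fin 5 → ℤ} {a b c d e : ℤ} (h : Reach m v ![a, b, c, d, e]) :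
    Reach m v ![a, d, e, b, c] :=
  h.step swapU (fun x y => by simp [B, swapU]; ring)

theorem Reach.e {m : ℤ} {v : Fin 5 → ℤ} {a b c d e : ℤ} (h : Reach m v ![a, b, c, d, e]) :
    Reach m v ![a, b, c, e, d] :=
  h.step swapE (fun x y => by simp [B, swapE]; ring)

theorem Reach.t {m : ℤ} {v : Fin 5 → ℤ} {a b c d e : ℤ} (h : Reach m v ![a, b, c, d, e]) (t : ℤ) :
    Reach m v ![a, b, c - t * e, d + t * b, e] :=
  h.step (eich t) (fun x y => by simp [B, eich]; ring)

theorem Reach.prim {m : ℤ} {v w : Fin 5 → ℤ} (h : Reach m v w) (hv : IsPrimitive v) :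
    IsPrimitive w := by
  obtain ⟨f, -, hf⟩ := h
  unfold IsPrimitive at *
  have h1 : ∀ i, Finset.univ.gcd w ∣ w i := fun i => Finset.gcd_dvd (Finset.mem_univ i)
  choose u hu using h1
  have h2 : w = Finset.univ.gcd w • u := by
    ext i; simpa using hu i
  have h3 : v = Finset.univ.gcd w • f.symm u := by
    rw [← map_smul, ← h2, ← hf]; simp
  have h4 : Finset.univ.gcd w ∣ Finset.univ.gcd v :=
    Finset.dvd_gcd fun i _ => ⟨f.symm u i, by simpa using congrFun h3 i⟩
  rw [hv] at h4
  rw [← Finset.normalize_gcd]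
  exact normalize_eq_one.2 (isUnit_of_dvd_one h4)

theorem reach_normal (m : ℤ) (v : Fin 5 → ℤ) : ∃ a b e : ℤ, Reach m v ![a, b, b * e, 0, 0] := by
  classical
  have h0 : Reach m v ![v 0, v 1, v 2, v 3, v 4] :=
    ⟨LinearEquiv.refl ℤ _, fun _ _ => rfl, by ext i; fin_cases i <;> rfl⟩
  by_cases hex : ∃ n : ℕ, ∃ a b c d e : ℤ, b ≠ 0 ∧ b.natAbs = n ∧ Reach m v ![a, b, c, d, e]
  swap
  · have key : ∀ a b c d e : ℤ, Reach m v ![a, b, c, d, e] → b = 0 := by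
      intro a b c d e h
      by_contra hb
      exact hex ⟨_, a, b, c, d, e, hb, rfl, h⟩
    have h1 := key _ _ _ _ _ h0
    have h3 := key _ _ _ _ _ h0.u
    have h4 := key _ _ _ _ _ h0.e.u
    have h2 := key _ _ _ _ _ h0.u.e.u
    rw [h1, h2, h3, h4] at h0
    exact ⟨v 0, 0, 0, by simpa using h0⟩
  · obtain ⟨a, b, c, d, e, hb, hn, h⟩ := Nat.find_spec hex
    -- minimality gives divisibility
    have key : ∀ a' c' d' e' : ℤ, Reach m v ![a', b, c', d', e'] → b ∣ d' := by
      intro a' c' d' e' h'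
      by_contra hd
      have hr : d' % b ≠ 0 := fun h => hd (Int.dvd_of_emod_eq_zero h)
      have h1 := (h'.t (-(d' / b))).u
      have h2 : d' + -(d' / b) * b = d' % b := by
        have := Int.emod_add_mul_ediv d' b
        linarith
      rw [h2] at h1
      have h3 := Nat.find_min' hex ⟨_, _, _, _, _, hr, rfl, h1⟩
      have h4 := Int.emod_lt_abs d' hb
      rw [Int.abs_eq_natAbs, hn] at h4
      have h6 := Int.natAbs_of_nonneg (Int.emod_nonneg d' hb)
      omega
    obtain ⟨p, rfl⟩ := key _ _ _ _ h
    obtain ⟨q, rfl⟩ := key _ _ _ _ h.e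
    have h1 := ((h.t (-p)).e).t (-q)
    have e1 : b * p + -p * b = 0 := by ring
    have e2 : b * q + -q * b = 0 := by ring
    rw [e1, e2] at h1
    have h2 := (h1.u.e.u).t 1
    have h3 := h2.u.e.u
    simp only [mul_zero, sub_zero, one_mul, zero_add] at h3
    obtain ⟨r, hr⟩ := key _ _ _ _ h3
    simp only [mul_zero, sub_zero] at h1
    rw [hr] at h1
    exact ⟨a, b, r, h1⟩

/-- Every primitive vector of `T_{2m}` is mapped by some isometry of `T_{2m}` to a
primitive vector of the form `(a, b, b·e, 0, 0)`. -/
theorem stmt_3 (m : ℤ) (v : Fin 5 → ℤ) (hv : IsPrimitive v) :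
    ∃ (a b e : ℤ) (f : (Fin 5 → ℤ) ≃ₗ[ℤ] (Fin 5 → ℤ)),
      (∀ x y, B m (f x) (f y) = B m x y) ∧
      f v = ![a, b, b * e, 0, 0] ∧ IsPrimitive ![a, b, b * e, 0, 0] := by
  obtain ⟨a, b, e, h⟩ := reach_normal m v
  have hp := h.prim hv
  obtain ⟨f, hf, hfv⟩ := h
  exact ⟨a, b, e, f, hf, hfv, hp⟩

end Stmt3
end

section
/- Let d be a positive integer. For all integers a and c there exists an isometry of 𝒜_{2d} which sends the vector (a, 1, c) to the vector (0, 1, r), where r = c − d·a². -/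
namespace Stmt4

/-- The bilinear form of `𝒜_{2d} = ⟨-2d⟩ ⊕ U` on `ℤ³`. -/
def B (d : ℤ) (x y : Fin 3 → ℤ) : ℤ := -2 * d * (x 0 * y 0) + x 1 * y 2 + x 2 * y 1

/-- There is an isometry of `𝒜_{2d}` sending `(a, 1, c)` to `(0, 1, c - d·a²)`. -/
theorem stmt_4 (d : ℤ) (hd : 0 < d) (a c : ℤ) :
    ∃ f : (Fin 3 → ℤ) ≃ₗ[ℤ] (Fin 3 → ℤ),
      (∀ x y, B d (f x) (f y) = B d x y) ∧
      f ![a, 1, c] = ![0, 1, c - d * a ^ 2] := by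
  refine ⟨{ toFun := fun x => ![x 0 - a * x 1, x 1, x 2 - 2 * d * a * x 0 + d * a ^ 2 * x 1]
            invFun := fun x => ![x 0 + a * x 1, x 1, x 2 + 2 * d * a * x 0 + d * a ^ 2 * x 1]
            map_add' := ?_
            map_smul' := ?_
            left_inv := ?_
            right_inv := ?_ }, ?_, ?_⟩
  · intro x y
    ext i
    fin_cases i <;> simp <;> ring
  · intro m x
    ext i
    fin_cases i <;> simp <;> ring
  · intro x
    ext i
    fin_cases i <;> simp <;> ring
  · intro x
    ext i
    fin_cases i <;> simp <;> ring
  · intro x y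
    simp [B]
    ring
  · ext i
    fin_cases i <;> simp <;> ring

end Stmt4
end

section
/- Let d be a positive integer. For all integers t and h, all integers w ≥ 0 and j with 0 < j ≤ ⌊d/2⌋, and each sign ε ∈ {+1, −1}, there exists an isometry of 𝒜_{2d} which sends the vector (w·h + ε·j, w, w·t) to the vector (j, w, s), where s = −d·w·h² − 2·ε·d·h·j + w·t. -/
namespace Stmt5

/-- The bilinear form of `𝒜_{2d} = ⟨-2d⟩ ⊕ U` on `ℤ³`. -/
def B (d : ℤ) (x y : Fin 3 → ℤ) : ℤ := -2 * d * (x 0 * y 0) + x 1 * y 2 + x 2 * y 1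

/-- There is an isometry of `𝒜_{2d}` sending `(w·h ± j, w, w·t)` to `(j, w, s)` with
`s = -d·w·h² ∓ 2d·h·j + w·t`, where `0 < j ≤ ⌊d/2⌋` and `w ≥ 0`. -/
theorem stmt_5 (d : ℤ) (hd : 0 < d) (t h w j ε : ℤ) (hw : 0 ≤ w)
    (hj₀ : 0 < j) (hj₁ : j ≤ d / 2) (hε : ε = 1 ∨ ε = -1) :
    ∃ f : (Fin 3 → ℤ) ≃ₗ[ℤ] (Fin 3 → ℤ),
      (∀ x y, B d (f x) (f y) = B d x y) ∧
      f ![w * h + ε * j, w, w * t] = ![j, w, -d * w * h ^ 2 - 2 * ε * d * h * j + w * t] := by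
  have hε2 : ε * ε = 1 := by rcases hε with rfl | rfl <;> norm_num
  refine ⟨{ toFun := fun x => ![ε * (x 0 - h * x 1), x 1, x 2 - 2 * d * h * x 0 + d * h ^ 2 * x 1]
            invFun := fun y => ![ε * y 0 + h * y 1, y 1,
              y 2 + 2 * d * h * (ε * y 0 + h * y 1) - d * h ^ 2 * y 1]
            map_add' := ?_
            map_smul' := ?_
            left_inv := ?_
            right_inv := ?_ }, ?_, ?_⟩
  · intro x y
    ext i
    fin_cases i <;> simp <;> ring
  · intro c x
    ext i
    fin_cases i <;> simp <;> ring
  · intro x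
    ext i
    rcases hε with rfl | rfl <;> fin_cases i <;> simp <;> ring
  · intro x
    ext i
    rcases hε with rfl | rfl <;> fin_cases i <;> simp <;> ring
  · intro x y
    rcases hε with rfl | rfl <;> simp [B] <;> ring
  · ext i
    rcases hε with rfl | rfl <;> fin_cases i <;> simp <;> ring

end Stmt5
end

section
/- Let p be a prime number and consider the lattice T_{2p}. Let q = (n, b, b·f, 0, 0) with integers n ≥ 0, b > 0, f, and gcd(n,b) = 1. Then there exists an isometry of T_{2p} sending q to one of the following vectors: (0, 1, r, 0, 0) for some integer r with 2b²f − 2pn² = 2r; or (1, 2, 2s, 0, 0) for some integer s with 2b²f − 2pn² = 8s − 2p; or (l, p, p·t, 0, 0) for some integers l, t with 0 < l ≤ ⌊p/2⌋ and 2b²f − 2pn² = 2p²t − 2pl²; or (j, 2p, 2p·u, 0, 0) for some integers j, u with 0 < j < p, j odd, and 2b²f − 2pn² = 8p²u − 2pj². -/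
namespace Stmt6

/-- The bilinear form of `T_{2m} = ⟨-2m⟩ ⊕ U ⊕ U` on `ℤ⁵`. -/
def B (m : ℤ) (x y : Fin 5 → ℤ) : ℤ :=
  -2 * m * (x 0 * y 0) + x 1 * y 2 + x 2 * y 1 + x 3 * y 4 + x 4 * y 3

/-- `w` is the image of `v` under some isometry of `T_{2m}`. -/
def Reach (m : ℤ) (v w : Fin 5 → ℤ) : Prop :=
  ∃ φ : (Fin 5 → ℤ) ≃ₗ[ℤ] (Fin 5 → ℤ), (∀ x y, B m (φ x) (φ y) = B m x y) ∧ φ v = w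

lemma Reach.trans {m : ℤ} {u v w : Fin 5 → ℤ} (h₁ : Reach m u v) (h₂ : Reach m v w) :
    Reach m u w := by
  obtain ⟨φ, hφ, rfl⟩ := h₁
  obtain ⟨ψ, hψ, rfl⟩ := h₂
  exact ⟨φ.trans ψ, fun x y => by simp [hψ, hφ], rfl⟩

lemma reach_neg (m a b c d e : ℤ) : Reach m ![a, b, c, d, e] ![-a, b, c, d, e] := by
  refine ⟨{ toFun := fun v => ![-v 0, v 1, v 2, v 3, v 4]
            invFun := fun v => ![-v 0, v 1, v 2, v 3, v 4]
            map_add' := ?_, map_smul' := ?_, left_inv := ?_, right_inv := ?_ }, ?_, ?_⟩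
  · intro x y; ext i; fin_cases i <;> simp <;> ring
  · intro r x; ext i; fin_cases i <;> simp
  · intro x; ext i; fin_cases i <;> simp
  · intro x; ext i; fin_cases i <;> simp
  · intro x y; simp [B]
  · simp

lemma reach_trans3 (m a b c d e : ℤ) :
    Reach m ![a, b, c, d, e] ![a + e, b, c, d + 2 * m * a + m * e, e] := by
  refine ⟨{ toFun := fun v => ![v 0 + v 4, v 1, v 2, v 3 + 2 * m * v 0 + m * v 4, v 4]
            invFun := fun v => ![v 0 - v 4, v 1, v 2, v 3 - 2 * m * v 0 + m * v 4, v 4]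
            map_add' := ?_, map_smul' := ?_, left_inv := ?_, right_inv := ?_ }, ?_, ?_⟩
  · intro x y; ext i; fin_cases i <;> simp <;> ring
  · intro r x; ext i; fin_cases i <;> simp <;> ring
  · intro x; ext i; fin_cases i <;> simp <;> ring
  · intro x; ext i; fin_cases i <;> simp <;> ring
  · intro x y; simp [B]; ring
  · simp

lemma reach_trans2 (m k a b c d e : ℤ) :
    Reach m ![a, b, c, d, e] ![a + k * b, b, c + 2 * m * k * a + m * k ^ 2 * b, d, e] := by
  refine ⟨{ toFun := fun v =>
              ![v 0 + k * v 1, v 1, v 2 + 2 * m * k * v 0 + m * k ^ 2 * v 1, v 3, v 4]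
            invFun := fun v =>
              ![v 0 - k * v 1, v 1, v 2 - 2 * m * k * v 0 + m * k ^ 2 * v 1, v 3, v 4]
            map_add' := ?_, map_smul' := ?_, left_inv := ?_, right_inv := ?_ }, ?_, ?_⟩
  · intro x y; ext i; fin_cases i <;> simp <;> ring
  · intro r x; ext i; fin_cases i <;> simp <;> ring
  · intro x; ext i; fin_cases i <;> simp <;> ring
  · intro x; ext i; fin_cases i <;> simp <;> ring
  · intro x y; simp [B]; ring
  · simp

lemma reach_row (m k a b c d e : ℤ) :
    Reach m ![a, b, c, d, e] ![a, b, c - k * d, d, e + k * b] := by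
  refine ⟨{ toFun := fun v => ![v 0, v 1, v 2 - k * v 3, v 3, v 4 + k * v 1]
            invFun := fun v => ![v 0, v 1, v 2 + k * v 3, v 3, v 4 - k * v 1]
            map_add' := ?_, map_smul' := ?_, left_inv := ?_, right_inv := ?_ }, ?_, ?_⟩
  · intro x y; ext i; fin_cases i <;> simp <;> ring
  · intro r x; ext i; fin_cases i <;> simp <;> ring
  · intro x; ext i; fin_cases i <;> simp
  · intro x; ext i; fin_cases i <;> simp
  · intro x y; simp [B]; ring
  · simp

lemma reach_col (m u w s t a b c d e : ℤ) (h : u * s + w * t = 1) :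
    Reach m ![a, b, c, d, e]
      ![a, u * b + w * d, t * e + s * c, s * d - t * b, u * e - w * c] := by
  refine ⟨{ toFun := fun v =>
              ![v 0, u * v 1 + w * v 3, t * v 4 + s * v 2, s * v 3 - t * v 1, u * v 4 - w * v 2]
            invFun := fun v =>
              ![v 0, s * v 1 - w * v 3, u * v 2 - t * v 4, u * v 3 + t * v 1, s * v 4 + w * v 2]
            map_add' := ?_, map_smul' := ?_, left_inv := ?_, right_inv := ?_ }, ?_, ?_⟩
  · intro x y; ext i; fin_cases i <;> simp <;> ring
  · intro r x; ext i; fin_cases i <;> simp <;> ring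
  · intro x; ext i; fin_cases i <;> simp
    · linear_combination x 1 * h
    · linear_combination x 2 * h
    · linear_combination x 3 * h
    · linear_combination x 4 * h
  · intro x; ext i; fin_cases i <;> simp
    · linear_combination x 1 * h
    · linear_combination x 2 * h
    · linear_combination x 3 * h
    · linear_combination x 4 * h
  · intro x y; simp [B]
    linear_combination (x 1 * y 2 + x 2 * y 1 + x 3 * y 4 + x 4 * y 3) * h
  · simp

/-- Reduction to `(n + k d, d, d h, 0, 0)` with `d = gcd(b, 2m)`. -/
lemma reach_main (m n b c d : ℤ) (hb : 0 < b) (hd : d = Int.gcd b (2 * m))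
    (hg : Int.gcd n b = 1) (k : ℤ) :
    ∃ h : ℤ, Reach m ![n, b, b * c, 0, 0] ![n + k * d, d, d * h, 0, 0] := by
  have hd0 : d ≠ 0 := by
    rw [hd]; intro h
    have := (Int.gcd_eq_zero_iff.mp (by exact_mod_cast h)).1
    omega
  obtain ⟨s, hs⟩ : d ∣ b := hd ▸ Int.gcd_dvd_left ..
  obtain ⟨t, ht⟩ : d ∣ 2 * m := hd ▸ Int.gcd_dvd_right ..
  have hbez : d = b * Int.gcdA b (2 * m) + 2 * m * Int.gcdB b (2 * m) := by
    rw [hd]; exact Int.gcd_eq_gcd_ab ..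
  generalize Int.gcdA b (2 * m) = x at hbez
  generalize Int.gcdB b (2 * m) = y at hbez
  have hcop : s * x + t * y = 1 := by
    apply mul_left_cancel₀ hd0
    rw [hs, ht] at hbez
    linear_combination -hbez
  have h1 : IsCoprime s t := ⟨x, y, by linear_combination hcop⟩
  have h2 : IsCoprime s n :=
    (Int.isCoprime_iff_gcd_eq_one.mpr hg).symm.of_isCoprime_of_dvd_left ⟨d, by rw [hs]; ring⟩
  obtain ⟨u, w, huw⟩ := h1.mul_right h2
  have R1 := reach_trans3 m n b (b * c) 0 0
  have R2 := reach_col m u w s (t * n) (n + 0) b (b * c) (0 + 2 * m * n + m * 0) 0 huw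
  have R3 := R1.trans R2
  have e1 : u * b + w * (0 + 2 * m * n + m * 0) = d := by
    rw [hs, ht]; linear_combination d * huw
  have e2 : s * (0 + 2 * m * n + m * 0) - t * n * b = 0 := by
    rw [hs, ht]; ring
  rw [e1, e2] at R3
  have R4 := R3.trans (reach_row m (s * c * w) _ _ _ _ _)
  have e3 : u * 0 - w * (b * c) + s * c * w * d = 0 := by rw [hs]; ring
  rw [e3] at R4
  have R5 := R4.trans (reach_trans2 m k _ _ _ _ _)
  refine ⟨s * s * c + t * k * n + m * k ^ 2, ?_⟩
  convert R5 using 2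
  · ring
  · congr 2
    rw [ht, hs]; ring

/-- Extract the norm equation. -/
lemma Reach.norm {m n b c a d e : ℤ} (h : Reach m ![n, b, b * c, 0, 0] ![a, d, e, 0, 0]) :
    2 * b ^ 2 * c - 2 * m * n ^ 2 = 2 * (d * e) - 2 * m * a ^ 2 := by
  obtain ⟨φ, hφ, h⟩ := h
  have := hφ ![n, b, b * c, 0, 0] ![n, b, b * c, 0, 0]
  rw [h] at this
  simp [B] at this
  linear_combination -this

/-- Let `p` be a prime and `q = (n, b, b·c, 0, 0)` with `n ≥ 0`, `b > 0`,
`gcd(n,b) = 1`. Then some isometry of `T_{2p}` sends `q` to a vector of one of the four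
shapes `(0,1,r,0,0)`, `(1,2,2s,0,0)`, `(l,p,p·t,0,0)` (with `0 < l ≤ ⌊p/2⌋`), or
`(j,2p,2p·u,0,0)` (with `0 < j < p`, `j` odd), with the stated norm conditions. -/
theorem stmt_6 (p : ℕ) (hp : p.Prime) (n b c : ℤ) (hn : 0 ≤ n) (hb : 0 < b)
    (hgcd : Int.gcd n b = 1) :
    ∃ φ : (Fin 5 → ℤ) ≃ₗ[ℤ] (Fin 5 → ℤ),
      (∀ x y, B p (φ x) (φ y) = B p x y) ∧
      ((∃ r : ℤ, 2 * b ^ 2 * c - 2 * p * n ^ 2 = 2 * r ∧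
          φ ![n, b, b * c, 0, 0] = ![0, 1, r, 0, 0]) ∨
       (∃ s : ℤ, 2 * b ^ 2 * c - 2 * p * n ^ 2 = 8 * s - 2 * p ∧
          φ ![n, b, b * c, 0, 0] = ![1, 2, 2 * s, 0, 0]) ∨
       (∃ l t : ℤ, 0 < l ∧ l ≤ (p : ℤ) / 2 ∧
          2 * b ^ 2 * c - 2 * p * n ^ 2 = 2 * p ^ 2 * t - 2 * p * l ^ 2 ∧
          φ ![n, b, b * c, 0, 0] = ![l, (p : ℤ), p * t, 0, 0]) ∨
       (∃ j u : ℤ, 0 < j ∧ j < (p : ℤ) ∧ Odd j ∧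
          2 * b ^ 2 * c - 2 * p * n ^ 2 = 8 * p ^ 2 * u - 2 * p * j ^ 2 ∧
          φ ![n, b, b * c, 0, 0] = ![j, 2 * (p : ℤ), 2 * p * u, 0, 0])) := by
  have hp2 : 2 ≤ p := hp.two_le
  have hdiv : b.gcd (2 * p) ∣ 2 * p := by
    have := Int.gcd_dvd_right (a := b) (b := 2 * p)
    exact_mod_cast this
  have hdb : ((b.gcd (2 * p) : ℕ) : ℤ) ∣ b := Int.gcd_dvd_left ..
  have key := reach_main p n b c _ hb rfl hgcd
  have hnot : ∀ a : ℤ, a ∣ n → a ∣ b → a ∣ 1 := fun a h₁ h₂ => by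
    have := Int.dvd_coe_gcd h₁ h₂
    rwa [hgcd] at this
  have hcases : b.gcd (2 * p) = 1 ∨ b.gcd (2 * p) = 2 ∨ b.gcd (2 * p) = p ∨
      b.gcd (2 * p) = 2 * p := by
    obtain ⟨a, e, ha, he, hae⟩ := Nat.dvd_mul.mp hdiv
    rw [← hae]
    rcases (Nat.dvd_prime Nat.prime_two).mp ha with rfl | rfl <;>
      rcases (Nat.dvd_prime hp).mp he with rfl | rfl <;> simp
  generalize b.gcd (2 * p) = d at *
  rcases hcases with rfl | rfl | rfl | rfl
  · obtain ⟨h, R⟩ := key (-n)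
    have e : n + -n * ((1 : ℕ) : ℤ) = 0 := by push_cast; ring
    rw [e] at R
    have N := R.norm
    obtain ⟨φ, hφ, R⟩ := R
    refine ⟨φ, hφ, Or.inl ⟨h, ?_, ?_⟩⟩
    · push_cast at N; linear_combination N
    · rw [R]; simp
  · have hn2 : n % 2 = 1 := by
      by_contra hh
      have := hnot 2 (by omega) (by exact_mod_cast hdb)
      omega
    obtain ⟨h, R⟩ := key (-(n / 2))
    have e : n + -(n / 2) * ((2 : ℕ) : ℤ) = 1 := by push_cast; omega
    rw [e] at R
    have N := R.norm
    obtain ⟨φ, hφ, R⟩ := R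
    refine ⟨φ, hφ, Or.inr (Or.inl ⟨h, ?_, ?_⟩)⟩
    · push_cast at N; linear_combination N
    · rw [R]; simp
  · have hnp : n % d ≠ 0 := by
      intro hh
      have := hnot d (Int.dvd_of_emod_eq_zero hh) hdb
      have := Int.le_of_dvd one_pos this
      omega
    have h0 : 0 ≤ n % d := Int.emod_nonneg _ (by omega)
    have h1 : n % d < d := Int.emod_lt_of_pos _ (by omega)
    have h2 := Int.emod_add_mul_ediv n d
    by_cases hl : n % d ≤ (d : ℤ) / 2
    · obtain ⟨h, R⟩ := key (-(n / d))
      have e : n + -(n / d) * (d : ℤ) = n % d := by linear_combination -h2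
      rw [e] at R
      have N := R.norm
      obtain ⟨φ, hφ, R⟩ := R
      exact ⟨φ, hφ, Or.inr (Or.inr (Or.inl ⟨n % d, h, by omega, hl,
        by linear_combination N, R⟩))⟩
    · obtain ⟨h, R⟩ := key (-(n / d) - 1)
      replace R := R.trans (reach_neg _ _ _ _ _ _)
      have e : -(n + (-(n / d) - 1) * (d : ℤ)) = d - n % d := by linear_combination h2
      rw [e] at R
      have N := R.norm
      obtain ⟨φ, hφ, R⟩ := R
      exact ⟨φ, hφ, Or.inr (Or.inr (Or.inl ⟨d - n % d, h, by omega, by omega,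
        by linear_combination N, R⟩))⟩
  · push_cast at *
    have hn2 : n % 2 = 1 := by
      by_contra hh
      have := hnot 2 (by omega) (dvd_trans (dvd_mul_right _ _) hdb)
      omega
    have hnp : ¬ (p : ℤ) ∣ n := by
      intro hh
      have := hnot p hh (dvd_trans (dvd_mul_left _ _) hdb)
      have := Int.le_of_dvd one_pos this
      omega
    have h0 : 0 ≤ n % (2 * p) := Int.emod_nonneg _ (by omega)
    have h1 : n % (2 * p) < 2 * p := Int.emod_lt_of_pos _ (by omega)
    have h2 := Int.emod_add_mul_ediv n (2 * p)
    have hne : n % (2 * p) ≠ p := by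
      intro hh
      apply hnp
      rw [hh] at h2
      exact ⟨1 + 2 * (n / (2 * p)), by linear_combination -h2⟩
    have hodd : (n % (2 * p)) % 2 = 1 := by
      rw [Int.emod_emod_of_dvd _ (dvd_mul_right _ _)]; exact hn2
    by_cases hl : n % (2 * p) < (p : ℤ)
    · obtain ⟨h, R⟩ := key (-(n / (2 * p)))
      have e : n + -(n / (2 * p)) * (2 * p : ℤ) = n % (2 * p) := by linear_combination -h2
      rw [e] at R
      have N := R.norm
      obtain ⟨φ, hφ, R⟩ := R
      exact ⟨φ, hφ, Or.inr (Or.inr (Or.inr ⟨n % (2 * p), h, by omega, hl,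
        Int.odd_iff.mpr hodd, by linear_combination N, R⟩))⟩
    · obtain ⟨h, R⟩ := key (-(n / (2 * p)) - 1)
      replace R := R.trans (reach_neg _ _ _ _ _ _)
      have e : -(n + (-(n / (2 * p)) - 1) * (2 * p : ℤ)) = 2 * p - n % (2 * p) := by
        linear_combination h2
      rw [e] at R
      have N := R.norm
      obtain ⟨φ, hφ, R⟩ := R
      exact ⟨φ, hφ, Or.inr (Or.inr (Or.inr ⟨2 * p - n % (2 * p), h, by omega, by omega,
        Int.odd_iff.mpr (by omega), by linear_combination N, R⟩))⟩

end Stmt6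
end

section
/- Let p be a prime number. For all integers t, s and f there exists an isometry of T_{2p} which sends the vector (t·s, t, f, 0, 0) to the vector (0, t, f − p·t·s², 0, 0). -/
namespace Stmt9

/-- The bilinear form of `T_{2m} = ⟨-2m⟩ ⊕ U ⊕ U` on `ℤ⁵`. -/
def B (m : ℤ) (x y : Fin 5 → ℤ) : ℤ :=
  -2 * m * (x 0 * y 0) + x 1 * y 2 + x 2 * y 1 + x 3 * y 4 + x 4 * y 3

/-- The Eichler transvection with parameter `s`. -/
def eich (m s : ℤ) (x : Fin 5 → ℤ) : Fin 5 → ℤ :=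
  ![x 0 - s * x 1, x 1, x 2 - 2 * m * s * x 0 + m * s ^ 2 * x 1, x 3, x 4]

theorem eich_neg (m s : ℤ) (x : Fin 5 → ℤ) : eich m (-s) (eich m s x) = x := by
  funext i
  fin_cases i <;> simp [eich] <;> ring

/-- The Eichler transvection as a linear equivalence. -/
def eichEquiv (m s : ℤ) : (Fin 5 → ℤ) ≃ₗ[ℤ] (Fin 5 → ℤ) where
  toFun := eich m s
  invFun := eich m (-s)
  map_add' x y := by
    funext i
    fin_cases i <;> simp [eich] <;> ring
  map_smul' c x := by
    funext i
    fin_cases i <;> simp [eich] <;> ring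
  left_inv x := eich_neg m s x
  right_inv x := by simpa using eich_neg m (-s) x

/-- For a prime `p` and integers `t`, `s`, `f`, some isometry of `T_{2p}` sends
`(t·s, t, f, 0, 0)` to `(0, t, f - p·t·s², 0, 0)`. -/
theorem stmt_9 (p : ℕ) (hp : p.Prime) (t s f : ℤ) :
    ∃ φ : (Fin 5 → ℤ) ≃ₗ[ℤ] (Fin 5 → ℤ),
      (∀ x y, B p (φ x) (φ y) = B p x y) ∧
      φ ![t * s, t, f, 0, 0] = ![0, t, f - p * t * s ^ 2, 0, 0] := by
  refine ⟨eichEquiv p s, fun x y => ?_, ?_⟩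
  · change B p (eich p s x) (eich p s y) = B p x y
    simp [B, eich]
    ring
  · change eich p s _ = _
    funext i
    fin_cases i <;> simp [eich] <;> ring

end Stmt9
end

section
/- Every 𝔽₂-linear subspace C of 𝔽₂¹⁵ with the property that every nonzero vector of C has Hamming weight exactly 8 satisfies dim_{𝔽₂} C ≤ 4. -/
/-- In each coordinate at most half of the codewords are nonzero. -/
theorem coord_half (C : Submodule (ZMod 2) (Fin 15 → ZMod 2)) [Fintype C] (i : Fin 15) :
    2 * (Finset.univ.filter (fun x : C => x.1 i ≠ 0)).card ≤ Fintype.card C := by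
  have hsum := Finset.card_filter_add_card_filter_not (s := (Finset.univ : Finset C))
    (fun x : C => x.1 i ≠ 0)
  rw [Finset.card_univ] at hsum
  have hle : (Finset.univ.filter (fun x : C => x.1 i ≠ 0)).card
      ≤ (Finset.univ.filter (fun x : C => ¬ x.1 i ≠ 0)).card := by
    by_cases hc : ∃ c : C, c.1 i ≠ 0
    · obtain ⟨c, hc⟩ := hc
      refine Finset.card_le_card_of_injOn (fun x => x + c) ?_
        (fun a _ b _ hab => add_right_cancel hab)
      intro x hx
      have key : ∀ a b : ZMod 2, a ≠ 0 → b ≠ 0 → a + b = 0 := by decide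
      have hx' : x.1 i ≠ 0 := by simpa using hx
      simpa using key _ _ hx' hc
    · push Not at hc
      simp [hc]
  omega

/-- Every `𝔽₂`-linear subspace of `𝔽₂¹⁵` all of whose nonzero vectors have Hamming
weight exactly `8` has dimension at most `4`. -/
theorem stmt_10 (C : Submodule (ZMod 2) (Fin 15 → ZMod 2))
    (h : ∀ x ∈ C, x ≠ 0 → hammingNorm x = 8) :
    Module.finrank (ZMod 2) C ≤ 4 := by
  classical
  haveI : Fintype C := Fintype.ofFinite C
  have hcard : Fintype.card C = 2 ^ Module.finrank (ZMod 2) C := by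
    have := Module.card_eq_pow_finrank (K := ZMod 2) (V := C)
    simpa [ZMod.card] using this
  have h1 : ∑ x : C, hammingNorm x.1
      = ∑ i : Fin 15, (Finset.univ.filter (fun x : C => x.1 i ≠ 0)).card := by
    simp only [hammingNorm, Finset.card_filter]
    exact Finset.sum_comm
  have h2 : ∑ x : C, hammingNorm x.1 + 8 = 8 * Fintype.card C := by
    have h3 : ∀ x : C, hammingNorm x.1 + (if x = 0 then 8 else 0) = 8 := by
      intro x
      by_cases hx : x = 0
      · simp [hx]
      · simp [hx, h x.1 x.2 (by simpa using hx)]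
    have h4 := Finset.sum_congr (rfl : (Finset.univ : Finset C) = Finset.univ)
      (fun x _ => h3 x)
    rw [Finset.sum_add_distrib] at h4
    simp at h4
    omega
  have h5 : 2 * ∑ i : Fin 15, (Finset.univ.filter (fun x : C => x.1 i ≠ 0)).card
      ≤ 15 * Fintype.card C := by
    rw [Finset.mul_sum]
    refine (Finset.sum_le_sum (fun i _ => coord_half C i)).trans ?_
    simp
  have h6 : 2 ^ Module.finrank (ZMod 2) C ≤ 2 ^ 4 := by
    rw [← hcard]
    omega
  exact (Nat.pow_le_pow_iff_right (by norm_num)).1 h6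
end

section
/- The only elements x of the lattice M with B(x,x) = −2 are the vectors M_p and −M_p for p ∈ P; i.e., if x ∈ M satisfies B(x,x) = −2 then x = M_p or x = −M_p for some p ∈ P. -/
namespace Stmt13

/-- The 15 nonzero points of `(𝔽₂)⁴`. -/
abbrev P : Type := {p : Fin 4 → ZMod 2 // p ≠ 0}

/-- The ambient `ℚ`-vector space `ℚ^P`. -/
abbrev V : Type := P → ℚ

/-- The standard basis vector `M_p`. -/
noncomputable def Mvec (p : P) : V := Pi.single p 1

/-- The bilinear form with `B (M_p) (M_q) = -2 δ_{pq}`. -/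
noncomputable def B (x y : V) : ℚ := -2 * ∑ p : P, x p * y p

/-- The vector `½ ∑_{p ∈ P, α·p = 1} M_p`, for `α ∈ (𝔽₂)⁴ \ {0}`: half the sum of the
basis vectors indexed by an affine hyperplane of `(𝔽₂)⁴` not containing `0`. -/
noncomputable def halfSum (α : Fin 4 → ZMod 2) : V :=
  (1/2 : ℚ) • ∑ p ∈ Finset.univ.filter (fun p : P => ∑ i, α i * p.val i = 1), Mvec p

/-- The Nikulin-type lattice `M_{(ℤ/2ℤ)⁴}`. -/
noncomputable def MLattice : Submodule ℤ V :=
  Submodule.span ℤ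
    (Set.range Mvec ∪ {x | ∃ α : Fin 4 → ZMod 2, α ≠ 0 ∧ x = halfSum α})

theorem card_hyp (α : Fin 4 → ZMod 2) (hα : α ≠ 0) :
    8 ≤ (Finset.univ.filter (fun p : P => ∑ i, α i * p.val i = 1)).card := by
  classical
  obtain ⟨j, hj⟩ := Function.ne_iff.1 hα
  have h01 : ∀ z : ZMod 2, z ≠ 0 → z = 1 := by decide
  have h10 : ∀ z : ZMod 2, ¬ z = 1 ↔ z + 1 = 1 := by decide
  have hj1 : α j = 1 := h01 _ hj
  -- translation by the `j`-th basis vector exchanges the hyperplane and its complement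
  have hshift : ∀ v : Fin 4 → ZMod 2,
      ∑ i, α i * (v + (Pi.single j 1 : Fin 4 → ZMod 2)) i = ∑ i, α i * v i + 1 := by
    intro v
    simp [mul_add, Finset.sum_add_distrib, Pi.single_apply, hj1]
  have hswap : (Finset.univ.filter (fun v : Fin 4 → ZMod 2 => ¬ ∑ i, α i * v i = 1)).card
      = (Finset.univ.filter (fun v : Fin 4 → ZMod 2 => ∑ i, α i * v i = 1)).card := by
    refine Finset.card_equiv (Equiv.addRight (Pi.single j 1)) fun v => ?_
    simp only [Finset.mem_filter, Finset.mem_univ, true_and, Equiv.coe_addRight, hshift]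
    exact h10 _
  have htot := Finset.card_filter_add_card_filter_not (s := Finset.univ)
    (fun v : Fin 4 → ZMod 2 => ∑ i, α i * v i = 1)
  rw [hswap, Finset.card_univ] at htot
  have h16 : Fintype.card (Fin 4 → ZMod 2) = 16 := by simp [ZMod.card]
  have hsub : (Finset.univ.filter (fun v : Fin 4 → ZMod 2 => ∑ i, α i * v i = 1)) ⊆
      (Finset.univ.filter (fun p : P => ∑ i, α i * p.val i = 1)).image Subtype.val := by
    intro v hv
    have hv1 := (Finset.mem_filter.1 hv).2
    have hv0 : v ≠ 0 := by
      rintro rfl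
      simp at hv1
    exact Finset.mem_image.2 ⟨⟨v, hv0⟩, by simpa using hv1, rfl⟩
  have hle := (Finset.card_le_card hsub).trans Finset.card_image_le
  omega

theorem mem_char (x : V) (hx : x ∈ MLattice) :
    ∃ (α : Fin 4 → ZMod 2) (y : P → ℤ), ∀ p : P, 2 * x p = (y p : ℚ) ∧
      ((y p : ℤ) : ZMod 2) = ∑ i, α i * p.val i := by
  classical
  unfold MLattice at hx
  induction hx using Submodule.span_induction with
  | mem x h =>
    rcases h with ⟨q, rfl⟩ | ⟨α, -, rfl⟩
    · refine ⟨0, fun p => if p = q then 2 else 0, fun p => ?_⟩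
      by_cases h : p = q
      · subst h
        simp [Mvec]
        rfl
      · simp [Mvec, h]
    · refine ⟨α, fun p => if ∑ i, α i * p.val i = 1 then 1 else 0, fun p => ?_⟩
      have h01 : ∀ z : ZMod 2, z ≠ 1 → z = 0 := by decide
      have hv : halfSum α p = if ∑ i, α i * p.val i = 1 then 1/2 else 0 := by
        simp only [halfSum, Mvec, Pi.smul_apply, Finset.sum_apply, Pi.single_apply,
          Finset.sum_ite_eq, Finset.mem_filter, Finset.mem_univ, true_and, smul_eq_mul]
        split_ifs <;> norm_num
      rw [hv]
      by_cases h : ∑ i, α i * p.val i = 1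
      · simp only [h, if_true]
        norm_num
      · simp only [h01 _ h]
        norm_num
  | zero => exact ⟨0, 0, fun p => by simp⟩
  | add x y _ _ hx hy =>
    obtain ⟨α, a, ha⟩ := hx
    obtain ⟨β, b, hb⟩ := hy
    refine ⟨α + β, a + b, fun p => ⟨?_, ?_⟩⟩
    · have h1 := (ha p).1
      have h2 := (hb p).1
      simp only [Pi.add_apply]
      push_cast
      linarith
    · simp only [Pi.add_apply, add_mul, Finset.sum_add_distrib]
      push_cast
      rw [(ha p).2, (hb p).2]
  | smul n x _ hx =>
    obtain ⟨α, a, ha⟩ := hx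
    refine ⟨fun i => (n : ZMod 2) * α i, fun p => n * a p, fun p => ⟨?_, ?_⟩⟩
    · have h1 := (ha p).1
      simp only [Pi.smul_apply, zsmul_eq_mul]
      push_cast
      rw [← h1]
      ring
    · push_cast
      rw [(ha p).2, Finset.mul_sum]
      simp only [mul_assoc]

/-- The only vectors of square `-2` in `M_{(ℤ/2ℤ)⁴}` are `± M_p`, `p ∈ P`. -/
theorem stmt_13 (x : V) (hx : x ∈ MLattice) (h2 : B x x = -2) :
    ∃ p : P, x = Mvec p ∨ x = -Mvec p := by
  classical
  obtain ⟨α, y, hy⟩ := mem_char x hx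
  have hs : ∑ p : P, y p ^ 2 = 4 := by
    have h3 : ∑ p : P, x p * x p = 1 := by
      unfold B at h2
      linarith
    have h4 : ∑ p : P, ((y p : ℚ)) ^ 2 = 4 := by
      calc ∑ p : P, ((y p : ℚ)) ^ 2 = ∑ p : P, 4 * (x p * x p) :=
            Finset.sum_congr rfl fun p _ => by rw [← (hy p).1]; ring
        _ = 4 := by rw [← Finset.mul_sum, h3]; norm_num
    exact_mod_cast h4
  by_cases hα : α = 0
  · subst hα
    have hev : ∀ p, ∃ z : ℤ, y p = 2 * z := fun p => by
      have := (hy p).2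
      simp only [Pi.zero_apply, zero_mul, Finset.sum_const_zero] at this
      exact (ZMod.intCast_zmod_eq_zero_iff_dvd _ 2).1 this
    choose z hz using hev
    have hxz : ∀ p, x p = z p := fun p => by
      have := (hy p).1
      rw [hz p] at this
      push_cast at this
      linarith
    have hz1 : ∑ p : P, z p ^ 2 = 1 := by
      simp only [hz, mul_pow, ← Finset.mul_sum] at hs
      linarith
    obtain ⟨q, hq⟩ : ∃ q, z q ≠ 0 := by
      by_contra! h
      simp [h] at hz1
    rw [← Finset.add_sum_erase _ _ (Finset.mem_univ q)] at hz1
    have hnn : ∀ p ∈ Finset.univ.erase q, 0 ≤ z p ^ 2 := fun p _ => sq_nonneg _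
    have hq1 : 0 < z q ^ 2 := by positivity
    have hr := Finset.sum_nonneg hnn
    have hr0 : ∑ p ∈ Finset.univ.erase q, z p ^ 2 = 0 := by omega
    have hq2 : z q ^ 2 = 1 := by omega
    have h0 : ∀ p, p ≠ q → z p = 0 := fun p hp => by
      have := (Finset.sum_eq_zero_iff_of_nonneg hnn).1 hr0 p (by simp [hp])
      exact pow_eq_zero_iff (two_ne_zero) |>.1 this
    refine ⟨q, ?_⟩
    rcases (show z q = 1 ∨ z q = -1 by simpa using hq2) with h | h
    · left
      funext p
      by_cases hp : p = q
      · subst hp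
        simp [hxz, h, Mvec]
      · simp [hxz, h0 p hp, Mvec, hp]
    · right
      funext p
      by_cases hp : p = q
      · subst hp
        simp [hxz, h, Mvec]
      · simp [hxz, h0 p hp, Mvec, hp]
  · exfalso
    have hc := card_hyp α hα
    have h1 : ∀ p ∈ Finset.univ.filter (fun p : P => ∑ i, α i * p.val i = 1), 1 ≤ y p ^ 2 := by
      intro p hp
      have hp1 := (Finset.mem_filter.1 hp).2
      have hne : y p ≠ 0 := fun h0 => by
        have := (hy p).2
        rw [hp1, h0] at this
        simp at this
      have : 0 < y p ^ 2 := by positivity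
      omega
    have h5 := Finset.card_nsmul_le_sum _ _ _ h1
    have h6 := Finset.sum_le_sum_of_subset_of_nonneg (f := fun p => y p ^ 2)
      (Finset.filter_subset (fun p : P => ∑ i, α i * p.val i = 1) Finset.univ)
      (fun p _ _ => sq_nonneg (y p))
    rw [nsmul_eq_mul, mul_one] at h5
    have h7 : (8 : ℤ) ≤ ((Finset.univ.filter (fun p : P => ∑ i, α i * p.val i = 1)).card : ℤ) := by
      exact_mod_cast hc
    linarith

end Stmt13
end
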